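/- arXiv:2204.01469 — 2 statements merged into one kernel-verified Lean document; each statement's English description precedes it below -/
import Mathlib

section
/- (Dirichlet normalization integral.) Let K ≥ 2 and let α_1, ..., α_K > 0 be real numbers. Then the integral over the open solid simplex S = { (x_1, ..., x_{K−1}) ∈ ℝ^{K−1} : x_i > 0 for all i and Σ_{i=1}^{K−1} x_i < 1 }, with x_K := 1 − Σ_{i=1}^{K−1} x_i, satisfies ∫_S ∏_{k=1}^{K} x_k^{α_k − 1} dx_1 ⋯ dx_{K−1} = ( ∏_{k=1}^K Γ(α_k) ) / Γ( Σ_{k=1}^K α_k ), where Γ is the real Gamma function and the integral is with respect to Lebesgue measure on ℝ^{K−1}. -/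
open Finset Real MeasureTheory

open scoped ENNReal

/-- The function `x ↦ x ^ (a - 1)` on the positive half-line, extended by zero, with values in
`ℝ≥0∞`. -/
noncomputable def posPow (a x : ℝ) : ℝ≥0∞ :=
  if 0 < x then ENNReal.ofReal (x ^ (a - 1)) else 0

lemma posPow_of_pos {a x : ℝ} (hx : 0 < x) : posPow a x = ENNReal.ofReal (x ^ (a - 1)) :=
  if_pos hx

lemma posPow_of_nonpos {a x : ℝ} (hx : x ≤ 0) : posPow a x = 0 :=
  if_neg hx.not_gt

@[fun_prop]
lemma measurable_posPow (a : ℝ) : Measurable (posPow a) :=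
  Measurable.ite measurableSet_Ioi (by fun_prop) (by fun_prop)

lemma posPow_mul_posPow_sub {a b t u : ℝ} (ha : 0 < a) (hb : 0 < b) (ht : 0 < t) :
    posPow a (t * u) * posPow b (t - t * u) =
      ENNReal.ofReal (ProbabilityTheory.beta a b * (t ^ (a - 1) * t ^ (b - 1))) *
        ProbabilityTheory.betaPDF a b u := by
  have hB := ProbabilityTheory.beta_pos ha hb
  rcases le_or_gt u 0 with hu | hu
  · rw [posPow_of_nonpos (mul_nonpos_of_nonneg_of_nonpos ht.le hu),
      ProbabilityTheory.betaPDF_eq_zero_of_nonpos hu, zero_mul, mul_zero]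
  rcases le_or_gt 1 u with hu1 | hu1
  · rw [posPow_of_nonpos (x := t - t * u) (by nlinarith),
      ProbabilityTheory.betaPDF_eq_zero_of_one_le hu1, mul_zero, mul_zero]
  have hv : 0 < 1 - u := sub_pos.2 hu1
  rw [show t - t * u = t * (1 - u) by ring, posPow_of_pos (mul_pos ht hu),
    posPow_of_pos (mul_pos ht hv), ProbabilityTheory.betaPDF_of_pos_lt_one hu hu1,
    ← ENNReal.ofReal_mul (by positivity), ← ENNReal.ofReal_mul (by positivity),
    Real.mul_rpow ht.le hu.le, Real.mul_rpow ht.le hv.le]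
  congr 1
  field_simp

/-- The convolution of two power functions on the positive half-line. -/
lemma lintegral_posPow_mul_posPow_sub {a b : ℝ} (ha : 0 < a) (hb : 0 < b) (t : ℝ) :
    ∫⁻ y, posPow a y * posPow b (t - y) =
      ENNReal.ofReal (ProbabilityTheory.beta a b) * posPow (a + b) t := by
  rcases le_or_gt t 0 with ht | ht
  · rw [posPow_of_nonpos ht, mul_zero]
    refine (lintegral_congr fun y => ?_).trans lintegral_zero
    rcases le_or_gt y 0 with hy | hy
    · rw [posPow_of_nonpos hy, zero_mul]
    · rw [posPow_of_nonpos (x := t - y) (by linarith), mul_zero]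
  have hB := ProbabilityTheory.beta_pos ha hb
  rw [← Real.smul_map_volume_mul_left ht.ne', lintegral_smul_measure,
    lintegral_map (by fun_prop) (by fun_prop)]
  simp_rw [posPow_mul_posPow_sub ha hb ht]
  rw [lintegral_const_mul' _ _ ENNReal.ofReal_ne_top,
    ProbabilityTheory.lintegral_betaPDF_eq_one ha hb, mul_one, smul_eq_mul, abs_of_pos ht,
    posPow_of_pos ht, ← ENNReal.ofReal_mul ht.le, ← ENNReal.ofReal_mul hB.le]
  congr 1
  rw [show a + b - 1 = 1 + (a - 1) + (b - 1) by ring, Real.rpow_add ht, Real.rpow_add ht,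
    Real.rpow_one]
  ring

/-- The iterated convolution of power functions on the positive half-line. -/
lemma lintegral_prod_posPow_mul_posPow_sub_sum (n : ℕ) (a : Fin n → ℝ) (ha : ∀ i, 0 < a i)
    {b : ℝ} (hb : 0 < b) (t : ℝ) :
    ∫⁻ x : Fin n → ℝ, (∏ i, posPow (a i) (x i)) * posPow b (t - ∑ i, x i) =
      ENNReal.ofReal ((∏ i, Real.Gamma (a i)) * Real.Gamma b / Real.Gamma (∑ i, a i + b)) *
        posPow (∑ i, a i + b) t := by
  induction n generalizing t with
  | zero =>
    have := (Real.Gamma_pos_of_pos hb).ne'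
    simp [volume_pi, div_self this]
  | succ n ih =>
    have hs : 0 < ∑ i : Fin n, a i.succ + b :=
      add_pos_of_nonneg_of_pos (Finset.sum_nonneg fun i _ => (ha _).le) hb
    have hΓ := Real.Gamma_pos_of_pos hs
    have hB := ProbabilityTheory.beta_pos (ha 0) hs
    calc
      _ = ∫⁻ z : ℝ × (Fin n → ℝ), posPow (a 0) z.1 *
            ((∏ i : Fin n, posPow (a i.succ) (z.2 i)) *
              posPow b (t - z.1 - ∑ i, z.2 i)) := by
        rw [← (volume_preserving_piFinSuccAbove (fun _ : Fin (n + 1) => ℝ)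
          0).symm.lintegral_comp_emb (MeasurableEquiv.measurableEmbedding _)]
        refine lintegral_congr fun z => ?_
        simp [MeasurableEquiv.piFinSuccAbove_symm_apply, Fin.insertNthEquiv,
          Fin.prod_univ_succ, Fin.sum_univ_succ, mul_assoc, sub_sub]
      _ = ∫⁻ y : ℝ, posPow (a 0) y *
            ∫⁻ x : Fin n → ℝ, (∏ i : Fin n, posPow (a i.succ) (x i)) *
              posPow b (t - y - ∑ i, x i) := by
        rw [Measure.volume_eq_prod, lintegral_prod _ (by fun_prop)]
        refine lintegral_congr fun y => ?_
        dsimp only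
        rw [lintegral_const_mul _ (by fun_prop)]
      _ = _ := by
        simp_rw [ih (fun i => a i.succ) (fun i => ha _), mul_left_comm (posPow (a 0) _)]
        rw [lintegral_const_mul' _ _ ENNReal.ofReal_ne_top,
          lintegral_posPow_mul_posPow_sub (ha 0) hs, ← mul_assoc,
          ← ENNReal.ofReal_mul' hB.le, Fin.sum_univ_succ, Fin.prod_univ_succ, add_assoc]
        congr 2
        rw [ProbabilityTheory.beta]
        field_simp

/-- Dirichlet normalization integral: with `K + 1 ≥ 2` classes and parameters
`α k > 0`, integrating `∏ k x k ^ (α k − 1)` over the open solid simplex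
`S = {x ∈ ℝ^K : x i > 0, Σ x i < 1}` (with last coordinate `1 − Σ x i`)
gives `(∏ k Γ(α k)) / Γ(Σ k α k)`. -/
theorem dirichlet_normalization (K : ℕ) (hK : 1 ≤ K)
    (α : Fin (K + 1) → ℝ) (hα : ∀ k, 0 < α k) :
    (∫ x : Fin K → ℝ in {x : Fin K → ℝ | (∀ i, 0 < x i) ∧ ∑ i, x i < 1},
        ∏ k : Fin (K + 1), Fin.snoc x (1 - ∑ i, x i) k ^ (α k - 1)) =
      (∏ k, Real.Gamma (α k)) / Real.Gamma (∑ k, α k) := by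
  have hS : MeasurableSet {x : Fin K → ℝ | (∀ i, 0 < x i) ∧ ∑ i, x i < 1} := by
    measurability
  simp only [Fin.prod_univ_castSucc, Fin.snoc_castSucc, Fin.snoc_last, Fin.sum_univ_castSucc]
  rw [integral_eq_lintegral_of_nonneg_ae
    (ae_restrict_of_forall_mem hS fun x hx => mul_nonneg
      (Finset.prod_nonneg fun i _ => Real.rpow_nonneg (hx.1 i).le _)
      (Real.rpow_nonneg (sub_pos.2 hx.2).le _))
    (Measurable.aestronglyMeasurable (by fun_prop)), ← lintegral_indicator hS]
  have key := lintegral_prod_posPow_mul_posPow_sub_sum K (fun i => α i.castSucc)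
    (fun i => hα _) (hα (Fin.last K)) 1
  rw [posPow_of_pos one_pos, Real.one_rpow, ENNReal.ofReal_one, mul_one] at key
  have hs : 0 < ∑ i : Fin K, α i.castSucc + α (Fin.last K) :=
    add_pos_of_nonneg_of_pos (Finset.sum_nonneg fun i _ => (hα _).le) (hα _)
  rw [← ENNReal.toReal_ofReal (div_nonneg (mul_nonneg
    (Finset.prod_nonneg fun i _ => (Real.Gamma_pos_of_pos (hα (Fin.castSucc i))).le)
    (Real.Gamma_pos_of_pos (hα (Fin.last K))).le) (Real.Gamma_pos_of_pos hs).le), ← key]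
  congr 1
  refine lintegral_congr fun x => ?_
  by_cases hx : x ∈ {x : Fin K → ℝ | (∀ i, 0 < x i) ∧ ∑ i, x i < 1}
  · rw [Set.indicator_of_mem hx, ENNReal.ofReal_mul
      (Finset.prod_nonneg fun i _ => Real.rpow_nonneg (hx.1 i).le _),
      ENNReal.ofReal_prod_of_nonneg fun i _ => Real.rpow_nonneg (hx.1 i).le _,
      posPow_of_pos (sub_pos.2 hx.2)]
    simp_rw [posPow_of_pos (hx.1 _)]
  · rw [Set.indicator_of_notMem hx]
    by_cases h : ∀ i, 0 < x i
    · have : 1 - ∑ i, x i ≤ 0 := sub_nonpos.2 (not_lt.1 fun h' => hx ⟨h, h'⟩)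
      rw [posPow_of_nonpos this, mul_zero]
    · obtain ⟨i, hi⟩ := not_forall.1 h
      rw [Finset.prod_eq_zero (Finset.mem_univ i) (posPow_of_nonpos (not_lt.1 hi)), zero_mul]
end

section
/- (Wolpert–Wolf: posterior mean of entropy under a Dirichlet distribution.) Let K ≥ 2, let α_1, ..., α_K > 0, and set A = Σ_{k=1}^K α_k. Let S = { (x_1, ..., x_{K−1}) ∈ ℝ^{K−1} : x_i > 0, Σ x_i < 1 } with x_K := 1 − Σ_{i=1}^{K−1} x_i, and let the Dirichlet(α) density on S be f(x) = ( Γ(A) / ∏_{k=1}^K Γ(α_k) ) ∏_{k=1}^K x_k^{α_k − 1}. Then the expected Shannon entropy under Dirichlet(α) is ∫_S ( −Σ_{k=1}^K x_k log x_k ) f(x) dx = ψ(A + 1) − Σ_{k=1}^K (α_k / A) ψ(α_k + 1), where ψ(t) = d/dt log Γ(t) is the digamma function. -/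
open Finset Real MeasureTheory

/-- The digamma function `ψ(t) = d/dt log Γ(t)`. -/
noncomputable def digamma (t : ℝ) : ℝ := deriv (fun s : ℝ => Real.log (Real.Gamma s)) t

/-- The full probability vector `(x_1, …, x_K, 1 − Σ x_i)` associated to a point of the
open solid simplex in `ℝ^K`. -/
noncomputable def fullVec {K : ℕ} (x : Fin K → ℝ) : Fin (K + 1) → ℝ :=
  Fin.snoc x (1 - ∑ i, x i)


/-- The open solid simplex of size `c` in `ℝ^K`. -/
def openSimplex (K : ℕ) (c : ℝ) : Set (Fin K → ℝ) := {x | (∀ i, 0 < x i) ∧ ∑ i, x i < c}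

lemma measurableSet_openSimplex (K : ℕ) (c : ℝ) : MeasurableSet (openSimplex K c) := by
  unfold openSimplex
  measurability

lemma integral_rpow_mul_sub_rpow {a s t : ℝ} (ha : 0 < a) (hs : 0 < s) (ht : 0 < t) :
    ∫ x in Set.Ioo 0 a, x ^ (s - 1) * (a - x) ^ (t - 1) =
      a ^ (s + t - 1) * (Gamma s * Gamma t / Gamma (s + t)) := by
  have h := Complex.betaIntegral_scaled (s : ℂ) (t : ℂ) ha
  rw [Complex.betaIntegral_eq_Gamma_mul_div _ _ (by simpa) (by simpa),
    intervalIntegral.integral_of_le ha.le, integral_Ioc_eq_integral_Ioo] at h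
  rw [← Complex.ofReal_inj, ← integral_complex_ofReal]
  refine (setIntegral_congr_fun measurableSet_Ioo fun x hx => ?_).trans (h.trans ?_)
  · simp only [Complex.ofReal_mul]
    rw [Complex.ofReal_cpow hx.1.le, Complex.ofReal_cpow (sub_nonneg.2 hx.2.le)]
    push_cast
    rfl
  · rw [← Complex.ofReal_add, Complex.Gamma_ofReal, Complex.Gamma_ofReal, Complex.Gamma_ofReal,
      Complex.ofReal_mul, Complex.ofReal_cpow ha.le]
    push_cast
    rfl

lemma lintegral_rpow_mul_sub_rpow {a s t : ℝ} (ha : 0 < a) (hs : 0 < s) (ht : 0 < t) :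
    ∫⁻ x in Set.Ioo 0 a, ENNReal.ofReal (x ^ (s - 1) * (a - x) ^ (t - 1)) =
      ENNReal.ofReal (a ^ (s + t - 1) * (Gamma s * Gamma t / Gamma (s + t))) := by
  have h := integral_rpow_mul_sub_rpow ha hs ht
  have hpos : 0 < a ^ (s + t - 1) * (Gamma s * Gamma t / Gamma (s + t)) := by
    have := Gamma_pos_of_pos hs
    have := Gamma_pos_of_pos ht
    have := Gamma_pos_of_pos (add_pos hs ht)
    positivity
  rw [← h, ofReal_integral_eq_lintegral_ofReal]
  · exact not_imp_comm.1 integral_undef (by rw [h]; exact hpos.ne')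
  · filter_upwards [ae_restrict_mem measurableSet_Ioo] with x hx
    exact mul_nonneg (rpow_nonneg hx.1.le _) (rpow_nonneg (sub_nonneg.2 hx.2.le) _)

lemma cons_mem_openSimplex {K : ℕ} {c y : ℝ} {z : Fin K → ℝ} :
    (Fin.cons y z : Fin (K + 1) → ℝ) ∈ openSimplex (K + 1) c ↔
      y ∈ Set.Ioo 0 c ∧ z ∈ openSimplex K (c - y) := by
  simp only [openSimplex, Set.mem_ofPred_eq, Fin.forall_fin_succ, Fin.cons_zero, Fin.cons_succ,
    Fin.sum_univ_succ, Set.mem_Ioo]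
  constructor
  · rintro ⟨⟨h0, h1⟩, h2⟩
    have := Finset.sum_nonneg fun i (_ : i ∈ univ) => (h1 i).le
    exact ⟨⟨h0, by linarith⟩, h1, by linarith⟩
  · rintro ⟨⟨h0, -⟩, h1, h2⟩
    exact ⟨⟨h0, h1⟩, by linarith⟩

/-- Dirichlet's integral over the open solid simplex of size `c`. -/
lemma lintegral_openSimplex (K : ℕ) (α : Fin K → ℝ) (hα : ∀ i, 0 < α i) {b c : ℝ}
    (hb : 0 < b) (hc : 0 < c) :
    ∫⁻ x in openSimplex K c,
        ENNReal.ofReal ((∏ i, x i ^ (α i - 1)) * (c - ∑ i, x i) ^ (b - 1)) =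
      ENNReal.ofReal (c ^ (∑ i, α i + b - 1) *
        ((∏ i, Gamma (α i)) * Gamma b / Gamma (∑ i, α i + b))) := by
  induction K generalizing c with
  | zero =>
    have : openSimplex 0 c = Set.univ := by ext; simp [openSimplex, hc]
    have := (Gamma_pos_of_pos hb).ne'
    simp [*, volume_pi]
  | succ K ih =>
    have hs : 0 < ∑ i : Fin K, α i.succ + b :=
      add_pos_of_nonneg_of_pos (Finset.sum_nonneg fun i _ => (hα _).le) hb
    have hg := (volume_preserving_piFinSuccAbove (fun _ : Fin (K + 1) => ℝ) 0).symm
    set C := (∏ i : Fin K, Gamma (α i.succ)) * Gamma b / Gamma (∑ i : Fin K, α i.succ + b) with hC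
    have hC0 : 0 ≤ C := div_nonneg (mul_nonneg
      (Finset.prod_nonneg fun i _ => (Gamma_pos_of_pos (hα _)).le) (Gamma_pos_of_pos hb).le)
      (Gamma_pos_of_pos hs).le
    have hmeas : Measurable ((openSimplex (K + 1) c).indicator fun x : Fin (K + 1) → ℝ =>
        ENNReal.ofReal ((∏ i, x i ^ (α i - 1)) * (c - ∑ i, x i) ^ (b - 1))) :=
      Measurable.indicator (by fun_prop) (measurableSet_openSimplex _ _)
    rw [← lintegral_indicator (measurableSet_openSimplex _ _), ← hg.lintegral_comp hmeas,
      Measure.volume_eq_prod, lintegral_prod]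
    swap
    · exact (hmeas.comp hg.measurable).aemeasurable
    calc
      _ = ∫⁻ y in Set.Ioo 0 c, ENNReal.ofReal C * ENNReal.ofReal
            (y ^ (α 0 - 1) * (c - y) ^ (∑ i : Fin K, α i.succ + b - 1)) := by
        rw [← lintegral_indicator measurableSet_Ioo]
        refine lintegral_congr fun y => ?_
        by_cases hy : y ∈ Set.Ioo 0 c
        · have hy0 : 0 ≤ y ^ (α 0 - 1) := rpow_nonneg hy.1.le _
          rw [Set.indicator_of_mem hy, ← ENNReal.ofReal_mul hC0,
            show C * (y ^ (α 0 - 1) * (c - y) ^ (∑ i : Fin K, α i.succ + b - 1)) =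
              y ^ (α 0 - 1) * ((c - y) ^ (∑ i : Fin K, α i.succ + b - 1) * C) by ring,
            ENNReal.ofReal_mul hy0, hC,
            ← ih (fun i => α i.succ) (fun i => hα _) (sub_pos.2 hy.2),
            ← lintegral_const_mul _ (by fun_prop),
            ← lintegral_indicator (measurableSet_openSimplex _ _)]
          refine lintegral_congr fun z => ?_
          change Set.indicator _ _ (Fin.insertNth 0 y z : Fin (K + 1) → ℝ) = _
          rw [Fin.insertNth_zero']
          by_cases hz : z ∈ openSimplex K (c - y)
          · rw [Set.indicator_of_mem hz, Set.indicator_of_mem (cons_mem_openSimplex.2 ⟨hy, hz⟩),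
              ← ENNReal.ofReal_mul hy0]
            simp only [Fin.prod_univ_succ, Fin.sum_univ_succ, Fin.cons_zero, Fin.cons_succ]
            rw [mul_assoc, sub_sub]
          · rw [Set.indicator_of_notMem hz, Set.indicator_of_notMem fun h =>
              hz (cons_mem_openSimplex.1 h).2]
        · rw [Set.indicator_of_notMem hy, ← lintegral_zero]
          refine lintegral_congr fun z => ?_
          change Set.indicator _ _ (Fin.insertNth 0 y z : Fin (K + 1) → ℝ) = _
          rw [Fin.insertNth_zero', Set.indicator_of_notMem fun h =>
              hy (cons_mem_openSimplex.1 h).1]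
      _ = _ := by
        rw [lintegral_const_mul _ (by fun_prop), lintegral_rpow_mul_sub_rpow hc (hα 0) hs,
          ← ENNReal.ofReal_mul hC0, Fin.sum_univ_succ, Fin.prod_univ_succ, ← add_assoc, hC]
        congr 1
        have := (Gamma_pos_of_pos hs).ne'
        field_simp

/-- The unnormalised Dirichlet density. -/
noncomputable def dirichletKernel {K : ℕ} (α : Fin (K + 1) → ℝ) (x : Fin K → ℝ) : ℝ :=
  ∏ k, fullVec x k ^ (α k - 1)

lemma fullVec_mem_Ioo {K : ℕ} (hK : 1 ≤ K) {x : Fin K → ℝ} (hx : x ∈ openSimplex K 1)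
    (k : Fin (K + 1)) : fullVec x k ∈ Set.Ioo 0 1 := by
  obtain ⟨h0, h1⟩ := hx
  refine Fin.lastCases ?_ (fun i => ?_) k
  · have : 0 < ∑ i, x i :=
      Finset.sum_pos (fun i _ => h0 i) ⟨⟨0, hK⟩, mem_univ _⟩
    simp only [fullVec, Fin.snoc_last, Set.mem_Ioo]
    constructor <;> linarith
  · have := Finset.single_le_sum (fun j _ => (h0 j).le) (mem_univ i)
    simp only [fullVec, Fin.snoc_castSucc, Set.mem_Ioo]
    exact ⟨h0 i, by linarith⟩

@[fun_prop]
lemma measurable_fullVec {K : ℕ} (k : Fin (K + 1)) :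
    Measurable fun x : Fin K → ℝ => fullVec x k := by
  refine Fin.lastCases ?_ (fun i => ?_) k
  · simp only [fullVec, Fin.snoc_last]
    fun_prop
  · simp only [fullVec, Fin.snoc_castSucc]
    fun_prop

@[fun_prop]
lemma measurable_dirichletKernel {K : ℕ} (α : Fin (K + 1) → ℝ) :
    Measurable (dirichletKernel α) := by
  unfold dirichletKernel
  fun_prop

lemma dirichletKernel_nonneg {K : ℕ} (hK : 1 ≤ K) (α : Fin (K + 1) → ℝ) {x : Fin K → ℝ}
    (hx : x ∈ openSimplex K 1) : 0 ≤ dirichletKernel α x :=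
  Finset.prod_nonneg fun k _ => rpow_nonneg (fullVec_mem_Ioo hK hx k).1.le _

lemma lintegral_dirichletKernel {K : ℕ} {α : Fin (K + 1) → ℝ} (hα : ∀ k, 0 < α k) :
    ∫⁻ x in openSimplex K 1, ENNReal.ofReal (dirichletKernel α x) =
      ENNReal.ofReal ((∏ k, Gamma (α k)) / Gamma (∑ k, α k)) := by
  simpa [dirichletKernel, fullVec, Fin.prod_univ_castSucc, Fin.sum_univ_castSucc] using
    lintegral_openSimplex K (fun i => α i.castSucc) (fun i => hα _) (hα (Fin.last K)) one_pos

lemma integrableOn_dirichletKernel {K : ℕ} (hK : 1 ≤ K) {α : Fin (K + 1) → ℝ}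
    (hα : ∀ k, 0 < α k) : IntegrableOn (dirichletKernel α) (openSimplex K 1) := by
  refine ⟨(measurable_dirichletKernel α).aestronglyMeasurable, ?_⟩
  rw [hasFiniteIntegral_iff_ofReal, lintegral_dirichletKernel hα]
  · exact ENNReal.ofReal_lt_top
  · filter_upwards [ae_restrict_mem (measurableSet_openSimplex K 1)] with x hx
    exact dirichletKernel_nonneg hK α hx

lemma integral_dirichletKernel {K : ℕ} (hK : 1 ≤ K) {α : Fin (K + 1) → ℝ}
    (hα : ∀ k, 0 < α k) :
    ∫ x in openSimplex K 1, dirichletKernel α x =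
      (∏ k, Gamma (α k)) / Gamma (∑ k, α k) := by
  rw [integral_eq_lintegral_of_nonneg_ae, lintegral_dirichletKernel hα, ENNReal.toReal_ofReal]
  · exact div_nonneg (Finset.prod_nonneg fun k _ => (Gamma_pos_of_pos (hα k)).le)
      (Gamma_nonneg_of_nonneg (Finset.sum_nonneg fun k _ => (hα k).le))
  · filter_upwards [ae_restrict_mem (measurableSet_openSimplex K 1)] with x hx
    exact dirichletKernel_nonneg hK α hx
  · exact (measurable_dirichletKernel α).aestronglyMeasurable

lemma add_single_pos {ι : Type*} [DecidableEq ι] {α : ι → ℝ} (hα : ∀ k, 0 < α k) (k : ι) {t : ℝ}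
    (ht : 0 < t) (j : ι) : 0 < (α + Pi.single k t : ι → ℝ) j := by
  have : (0 : ι → ℝ) ≤ Pi.single k t := Pi.single_nonneg.2 ht.le
  exact add_pos_of_pos_of_nonneg (hα j) (this j)

lemma dirichletKernel_add_single {K : ℕ} (hK : 1 ≤ K) (α : Fin (K + 1) → ℝ) (k : Fin (K + 1))
    (t : ℝ) {x : Fin K → ℝ} (hx : x ∈ openSimplex K 1) :
    dirichletKernel (α + Pi.single k t) x = dirichletKernel α x * fullVec x k ^ t := by
  have h : fullVec x k ^ t = ∏ j, fullVec x j ^ (Pi.single k t : Fin (K + 1) → ℝ) j := by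
    rw [Finset.prod_eq_single k (fun j _ hj => by simp [hj]) (by simp), Pi.single_eq_same]
  rw [h, dirichletKernel, dirichletKernel, ← Finset.prod_mul_distrib]
  refine Finset.prod_congr rfl fun j _ => ?_
  rw [← rpow_add (fullVec_mem_Ioo hK hx j).1, Pi.add_apply]
  ring_nf

lemma integral_dirichletKernel_mul_rpow {K : ℕ} (hK : 1 ≤ K) {α : Fin (K + 1) → ℝ}
    (hα : ∀ k, 0 < α k) (k : Fin (K + 1)) {t : ℝ} (ht : 0 < t) :
    ∫ x in openSimplex K 1, dirichletKernel α x * fullVec x k ^ t =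
      (∏ j, Gamma (α j)) / Gamma (α k) * (Gamma (α k + t) / Gamma (∑ j, α j + t)) := by
  rw [← setIntegral_congr_fun (measurableSet_openSimplex K 1)
    fun x hx => dirichletKernel_add_single hK α k t hx,
    integral_dirichletKernel hK (add_single_pos hα k ht)]
  have h0 := (Gamma_pos_of_pos (hα k)).ne'
  have hsum : ∑ j, (α + Pi.single k t : Fin (K + 1) → ℝ) j = ∑ j, α j + t := by
    simp [Finset.sum_add_distrib]
  have hprod : ∏ j, Gamma ((α + Pi.single k t : Fin (K + 1) → ℝ) j) =
      (∏ j, Gamma (α j)) / Gamma (α k) * Gamma (α k + t) := by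
    rw [← Finset.mul_prod_erase _ _ (mem_univ k),
      ← Finset.mul_prod_erase _ (fun j => Gamma (α j)) (mem_univ k),
      mul_div_cancel_left₀ _ h0, mul_comm, Pi.add_apply, Pi.single_eq_same]
    congr 1
    refine Finset.prod_congr rfl fun j hj => ?_
    simp [Finset.ne_of_mem_erase hj]
  rw [hsum, hprod, mul_div_assoc]

lemma hasDerivAt_Gamma_digamma {t : ℝ} (ht : 0 < t) :
    HasDerivAt Gamma (digamma t * Gamma t) t := by
  have hne := (Gamma_pos_of_pos ht).ne'
  have hd : DifferentiableAt ℝ Gamma t := differentiableAt_Gamma fun m => by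
    have : (0 : ℝ) ≤ m := m.cast_nonneg
    linarith
  have h : digamma t = deriv Gamma t / Gamma t := (hd.hasDerivAt.log hne).deriv
  rw [h, div_mul_cancel₀ _ hne]
  exact hd.hasDerivAt

lemma hasDerivAt_Gamma_add_div_Gamma_add {a b t : ℝ} (ha : 0 < a + t) (hb : 0 < b + t) :
    HasDerivAt (fun s => Gamma (a + s) / Gamma (b + s))
      (Gamma (a + t) / Gamma (b + t) * (digamma (a + t) - digamma (b + t))) t := by
  have hne := (Gamma_pos_of_pos hb).ne'
  refine (((hasDerivAt_Gamma_digamma ha).comp_const_add a t).div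
    ((hasDerivAt_Gamma_digamma hb).comp_const_add b t) hne).congr_deriv ?_
  field_simp

lemma integral_dirichletKernel_mul_log {K : ℕ} (hK : 1 ≤ K) {α : Fin (K + 1) → ℝ}
    (hα : ∀ k, 0 < α k) (k : Fin (K + 1)) :
    IntegrableOn (fun x => dirichletKernel α x * (fullVec x k * log (fullVec x k)))
        (openSimplex K 1) ∧
      ∫ x in openSimplex K 1, dirichletKernel α x * (fullVec x k * log (fullVec x k)) =
        (∏ j, Gamma (α j)) / Gamma (∑ j, α j) *
          (α k / (∑ j, α j) * (digamma (α k + 1) - digamma (∑ j, α j + 1))) := by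
  have hA : 0 < ∑ j, α j := Finset.sum_pos (fun j _ => hα j) ⟨k, mem_univ k⟩
  have hmem := ae_restrict_mem (μ := volume) (measurableSet_openSimplex K 1)
  have hs : Set.Ioi (1 / 2 : ℝ) ∈ nhds (1 : ℝ) := Ioi_mem_nhds (by norm_num)
  have hbound : ∀ x ∈ openSimplex K 1, ∀ t ∈ Set.Ioi (1 / 2 : ℝ),
      ‖dirichletKernel α x * (fullVec x k ^ t * log (fullVec x k))‖ ≤
        dirichletKernel α x * 2 := by
    intro x hx t ht
    have hx' := fullVec_mem_Ioo hK hx k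
    rw [norm_mul, Real.norm_of_nonneg (dirichletKernel_nonneg hK α hx)]
    refine mul_le_mul_of_nonneg_left ?_ (dirichletKernel_nonneg hK α hx)
    have h2 := (abs_log_mul_self_rpow_lt _ (1 / 2) hx'.1 hx'.2.le (by norm_num)).le
    rw [abs_mul, abs_of_nonneg (rpow_nonneg hx'.1.le _)] at h2
    rw [norm_mul, Real.norm_of_nonneg (rpow_nonneg hx'.1.le _), Real.norm_eq_abs, mul_comm]
    exact (mul_le_mul_of_nonneg_left (rpow_le_rpow_of_exponent_ge hx'.1 hx'.2.le
      (le_of_lt ht)) (abs_nonneg _)).trans (h2.trans (by norm_num))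
  obtain ⟨hint, hder⟩ := hasDerivAt_integral_of_dominated_loc_of_deriv_le
    (μ := volume.restrict (openSimplex K 1)) (x₀ := (1 : ℝ))
    (F := fun t x => dirichletKernel α x * fullVec x k ^ t)
    (F' := fun t x => dirichletKernel α x * (fullVec x k ^ t * log (fullVec x k)))
    (bound := fun x => dirichletKernel α x * 2) hs
    (.of_forall fun t => Measurable.aestronglyMeasurable (by fun_prop))
    ((integrableOn_dirichletKernel hK (add_single_pos hα k one_pos)).congr
      (hmem.mono fun x hx => dirichletKernel_add_single hK α k 1 hx))
    (Measurable.aestronglyMeasurable (by fun_prop))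
    (hmem.mono hbound)
    ((integrableOn_dirichletKernel hK hα).mul_const 2)
    (hmem.mono fun x hx t _ => (hasStrictDerivAt_const_rpow
      (fullVec_mem_Ioo hK hx k).1 t).hasDerivAt.const_mul _)
  simp only [rpow_one] at hint hder
  refine ⟨hint, hder.unique ?_⟩
  have h := (hasDerivAt_Gamma_add_div_Gamma_add (a := α k) (b := ∑ j, α j) (t := 1)
    (add_pos (hα k) one_pos) (add_pos hA one_pos)).const_mul
    ((∏ j, Gamma (α j)) / Gamma (α k))
  refine (h.congr_of_eventuallyEq ?_).congr_deriv ?_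
  · filter_upwards [hs] with t ht
    exact integral_dirichletKernel_mul_rpow hK hα k (lt_trans (by norm_num) ht)
  · have h0 := (Gamma_pos_of_pos (hα k)).ne'
    have h1 := (Gamma_pos_of_pos hA).ne'
    rw [Gamma_add_one (hα k).ne', Gamma_add_one hA.ne']
    field_simp

/-- Wolpert–Wolf: the posterior mean of the Shannon entropy under a
`Dirichlet(α)` distribution (on `K + 1 ≥ 2` classes, parametrized by the open
solid simplex in `ℝ^K` with last coordinate `1 − Σ x i`) equals
`ψ(A + 1) − Σ_k (α k / A) ψ(α k + 1)` where `A = Σ_k α k`. -/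
theorem wolpert_wolf_expected_entropy (K : ℕ) (hK : 1 ≤ K)
    (α : Fin (K + 1) → ℝ) (hα : ∀ k, 0 < α k) :
    (∫ x : Fin K → ℝ in {x : Fin K → ℝ | (∀ i, 0 < x i) ∧ ∑ i, x i < 1},
        (-∑ k : Fin (K + 1), fullVec x k * Real.log (fullVec x k)) *
          ((Real.Gamma (∑ k, α k) / ∏ k, Real.Gamma (α k)) *
            ∏ k : Fin (K + 1), fullVec x k ^ (α k - 1))) =
      digamma ((∑ k, α k) + 1) - ∑ k, (α k / (∑ j, α j)) * digamma (α k + 1) := by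
  have hA : 0 < ∑ j, α j := Finset.sum_pos (fun j _ => hα j) ⟨0, mem_univ 0⟩
  have hΓA := (Gamma_pos_of_pos hA).ne'
  have hΓ : ∏ k, Gamma (α k) ≠ 0 :=
    Finset.prod_ne_zero_iff.2 fun k _ => (Gamma_pos_of_pos (hα k)).ne'
  have hw : ∑ k, α k / (∑ j, α j) = 1 := by rw [← Finset.sum_div, div_self hA.ne']
  set C := Gamma (∑ k, α k) / ∏ k, Gamma (α k) with hC
  calc
    _ = ∫ x in openSimplex K 1, -C *
          ∑ k, dirichletKernel α x * (fullVec x k * log (fullVec x k)) := by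
      refine integral_congr_ae (.of_forall fun x => ?_)
      simp only [← Finset.mul_sum, dirichletKernel]
      ring
    _ = -C * ∑ k, (∏ j, Gamma (α j)) / Gamma (∑ j, α j) *
          (α k / (∑ j, α j) * (digamma (α k + 1) - digamma (∑ j, α j + 1))) := by
      rw [integral_const_mul, integral_finsetSum _ fun k _ =>
        (integral_dirichletKernel_mul_log hK hα k).1]
      simp only [(integral_dirichletKernel_mul_log hK hα _).2]
    _ = _ := by
      rw [← Finset.mul_sum, ← mul_assoc, show -C * ((∏ j, Gamma (α j)) / Gamma (∑ j, α j)) = -1 by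
        rw [hC]; field_simp]
      simp only [mul_sub, Finset.sum_sub_distrib, ← Finset.sum_mul, hw]
      ring
end
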